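/- Summing the conservative cut-cell update over all cells of a periodic grid, interior fluxes cancel and the total fluid conserved quantity satisfies ∫_{Ω_f^{n+1}} w^{n+1} = ∫_{Ω_f^n} w^n + Δt Σ_F S_F f_F, provided the swept-quantity compatibility Σ_F Δw_F^n = Σ_C (α_C^{n+1} - α_C^n) w_C^n holds. -/

import Mathlib

/-- Global conservation on a periodic Cartesian grid: summing the conservative cut-cell
update over all cells, the interior fluxes cancel by telescoping and, provided the
swept-quantity compatibility holds, the total fluid conserved quantity satisfies
`∫_{Ω_f^{n+1}} w^{n+1} = ∫_{Ω_f^n} w^n + Δt ∑_F S_F f_F`. -/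
theorem global_conservation (N M : ℕ) [NeZero N] [NeZero M]
    (Δt Δx Δy : ℝ) (hΔx : 0 < Δx) (hΔy : 0 < Δy)
    (α α' : ZMod N × ZMod M → ℝ)
    (hα : ∀ c, α c ∈ Set.Icc (0 : ℝ) 1) (hα' : ∀ c, α' c ∈ Set.Icc (0 : ℝ) 1)
    (w w' : ZMod N × ZMod M → Fin 4 → ℝ)
    -- `fE c` (resp. `fN c`) is the flux through the face shared by cell `c` and its right
    -- (resp. top) neighbor, with solid surface fraction `κE c` (resp. `κN c`).
    (fE fN : ZMod N × ZMod M → Fin 4 → ℝ)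
    (κE κN : ZMod N × ZMod M → ℝ)
    -- `bnd c = ∑_{F ∈ c} S_F f_F` and `swept c = ∑_{F ∈ c} Δw_F^n`.
    (bnd swept : ZMod N × ZMod M → Fin 4 → ℝ)
    (hupdate : ∀ c : ZMod N × ZMod M,
      (1 - α' c) • (w' c - w c) =
        Δt • (((1 - κE (c.1 - 1, c.2)) / Δx) • fE (c.1 - 1, c.2)
            - ((1 - κE c) / Δx) • fE c
            + ((1 - κN (c.1, c.2 - 1)) / Δy) • fN (c.1, c.2 - 1)
            - ((1 - κN c) / Δy) • fN c)
          + (Δt / (Δx * Δy)) • bnd c + swept c)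
    (hswept : ∑ c : ZMod N × ZMod M, swept c
        = ∑ c : ZMod N × ZMod M, (α' c - α c) • w c) :
    (Δx * Δy) • ∑ c : ZMod N × ZMod M, (1 - α' c) • w' c
      = (Δx * Δy) • ∑ c : ZMod N × ZMod M, (1 - α c) • w c
        + Δt • ∑ c : ZMod N × ZMod M, bnd c := by
  have hE : ∑ c : ZMod N × ZMod M,
      ((1 - κE (c.1 - 1, c.2)) / Δx) • fE (c.1 - 1, c.2)
      = ∑ c : ZMod N × ZMod M, ((1 - κE c) / Δx) • fE c :=
    Equiv.sum_comp ((Equiv.subRight (1 : ZMod N)).prodCongr (Equiv.refl (ZMod M)))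
      (fun c => ((1 - κE c) / Δx) • fE c)
  have hN : ∑ c : ZMod N × ZMod M,
      ((1 - κN (c.1, c.2 - 1)) / Δy) • fN (c.1, c.2 - 1)
      = ∑ c : ZMod N × ZMod M, ((1 - κN c) / Δy) • fN c :=
    Equiv.sum_comp ((Equiv.refl (ZMod N)).prodCongr (Equiv.subRight (1 : ZMod M)))
      (fun c => ((1 - κN c) / Δy) • fN c)
  have hsum := Finset.sum_congr (rfl : (Finset.univ : Finset (ZMod N × ZMod M)) = Finset.univ)
    (fun c _ => hupdate c)
  rw [Finset.sum_add_distrib, Finset.sum_add_distrib, ← Finset.smul_sum, ← Finset.smul_sum,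
    Finset.sum_sub_distrib, Finset.sum_add_distrib, Finset.sum_sub_distrib, hE, hN, hswept,
    sub_self, zero_add, sub_self, smul_zero, zero_add] at hsum
  have hw : ∑ c : ZMod N × ZMod M, (1 - α' c) • w' c
      = ∑ c : ZMod N × ZMod M, (1 - α c) • w c
        + (Δt / (Δx * Δy)) • ∑ c : ZMod N × ZMod M, bnd c := by
    have h1 : ∑ c : ZMod N × ZMod M, (1 - α' c) • w' c
        = ∑ c : ZMod N × ZMod M, (1 - α' c) • (w' c - w c)
          + ∑ c : ZMod N × ZMod M, (1 - α' c) • w c := by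
      rw [← Finset.sum_add_distrib]
      refine Finset.sum_congr rfl fun c _ => ?_
      module
    have h2 : ∑ c : ZMod N × ZMod M, (1 - α c) • w c
        = ∑ c : ZMod N × ZMod M, (α' c - α c) • w c
          + ∑ c : ZMod N × ZMod M, (1 - α' c) • w c := by
      rw [← Finset.sum_add_distrib]
      refine Finset.sum_congr rfl fun c _ => ?_
      module
    rw [h1, h2, hsum]
    abel
  rw [hw, smul_add, smul_smul, mul_div_cancel₀ _ (mul_pos hΔx hΔy).ne']
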